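/- arXiv:2204.10317 — 2 statements merged into one kernel-verified Lean document; each statement's English description precedes it below -/
import Mathlib

section
/- For every finite simple graph G (with at least one edge), v(G) = i_ve(G), where v(G) is the minimum cardinality of an independent set A such that N_G(A) is a minimal vertex cover, and i_ve(G) is the minimum cardinality of an independent vertex-wise dominating set of G. -/
/-- `S` is an independent set of the graph `G`. -/
def IsIndepSet {V : Type*} (G : SimpleGraph V) (S : Set V) : Prop :=
  ∀ x ∈ S, ∀ y ∈ S, ¬ G.Adj x y

/-- `u` vertex-wise dominates the edge `xy`: `u ∈ N_G[x] ∪ N_G[y]`. -/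
def VeDominates {V : Type*} (G : SimpleGraph V) (u x y : V) : Prop :=
  u = x ∨ u = y ∨ G.Adj u x ∨ G.Adj u y

/-- `S` is a vertex-wise dominating set of `G`. -/
def IsVeDomSet {V : Type*} (G : SimpleGraph V) (S : Set V) : Prop :=
  ∀ x y : V, G.Adj x y → ∃ s ∈ S, VeDominates G s x y

/-- `W` is a vertex cover of `G`. -/
def IsVertexCover {V : Type*} (G : SimpleGraph V) (W : Set V) : Prop :=
  ∀ x y : V, G.Adj x y → x ∈ W ∨ y ∈ W

/-- `W` is a minimal vertex cover of `G`. -/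
def IsMinVertexCover {V : Type*} (G : SimpleGraph V) (W : Set V) : Prop :=
  IsVertexCover G W ∧ ∀ W' ⊂ W, ¬ IsVertexCover G W'

/-- `N_G(A) = ⋃_{a ∈ A} N_G(a)`. -/
def nbhdSet {V : Type*} (G : SimpleGraph V) (A : Set V) : Set V :=
  {v : V | ∃ a ∈ A, G.Adj a v}

/-- The v-number of a graph `G`: the minimum cardinality of an independent
set `A` such that `N_G(A)` is a minimal vertex cover. -/
noncomputable def vNumber {V : Type*} [Fintype V] [DecidableEq V]
    (G : SimpleGraph V) : ℕ :=
  sInf {n : ℕ | ∃ A : Finset V,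
    IsIndepSet G ↑A ∧ IsMinVertexCover G (nbhdSet G ↑A) ∧ A.card = n}

/-- The independent vertex-wise domination number `i_ve(G)`. -/
noncomputable def iVe {V : Type*} [Fintype V] [DecidableEq V]
    (G : SimpleGraph V) : ℕ :=
  sInf {n : ℕ | ∃ S : Finset V,
    IsIndepSet G ↑S ∧ IsVeDomSet G ↑S ∧ S.card = n}

theorem minCover_iff_veDom {V : Type*} (G : SimpleGraph V) (A : Set V) (hA : IsIndepSet G A) :
    IsMinVertexCover G (nbhdSet G A) ↔ IsVeDomSet G A := by
  constructor
  · rintro ⟨h, -⟩ x y hxy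
    rcases h x y hxy with ⟨a, ha, h1⟩ | ⟨a, ha, h1⟩
    · exact ⟨a, ha, Or.inr (Or.inr (Or.inl h1))⟩
    · exact ⟨a, ha, Or.inr (Or.inr (Or.inr h1))⟩
  · intro h
    refine ⟨?_, ?_⟩
    · intro x y hxy
      obtain ⟨s, hs, h1 | h1 | h1 | h1⟩ := h x y hxy
      · exact Or.inr ⟨s, hs, h1 ▸ hxy⟩
      · exact Or.inl ⟨s, hs, h1 ▸ hxy.symm⟩
      · exact Or.inl ⟨s, hs, h1⟩
      · exact Or.inr ⟨s, hs, h1⟩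
    · intro W hW hc
      obtain ⟨hsub, hne⟩ := hW
      apply hne
      rintro v ⟨a, ha, hav⟩
      rcases hc a v hav with h1 | h1
      · obtain ⟨b, hb, hba⟩ := hsub h1
        exact absurd hba (hA b hb a ha)
      · exact h1

/-- For every finite simple graph `G` with at least one edge,
`v(G) = i_ve(G)`. -/
theorem vNumber_eq_iVe {V : Type*} [Fintype V] [DecidableEq V]
    (G : SimpleGraph V) (hedge : ∃ x y : V, G.Adj x y) :
    vNumber G = iVe G := by
  unfold vNumber iVe
  congr 1
  ext n
  constructor
  · rintro ⟨A, h1, h2, h3⟩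
    exact ⟨A, h1, (minCover_iff_veDom G _ h1).1 h2, h3⟩
  · rintro ⟨A, h1, h2, h3⟩
    exact ⟨A, h1, (minCover_iff_veDom G _ h1).2 h2, h3⟩
end

section
/- Let P_4 be the path graph on 4 vertices. Then v(P_4) = 1 and β(Ind(P_4)) = 2; in particular the inequality v(X) ≤ β(X) can be strict even for independence complexes of graphs. -/
open scoped Classical

/-- The independence complex of `G`. -/
def indComplex {V : Type*} (G : SimpleGraph V) : Set (Finset V) :=
  {A : Finset V | IsIndepSet G ↑A}

/-- The link of a face `A` in a complex `X`. -/
def link {V : Type*} [DecidableEq V] (X : Set (Finset V)) (A : Finset V) :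
    Set (Finset V) :=
  {T : Finset V | T ∈ X ∧ A ∩ T = ∅ ∧ T ∪ A ∈ X}

/-- A family `Y` of finite sets is a simplex if the union of all its members
is itself a member. -/
def IsSimplex {V : Type*} [Fintype V] (Y : Set (Finset V)) : Prop :=
  Finset.univ.filter (fun v => ∃ T ∈ Y, v ∈ T) ∈ Y

/-- `β(X)`: the maximum cardinality of a face `A` which is minimal (under
inclusion) with the property that `lk(X;A)` is a simplex. -/
noncomputable def betaNumber {V : Type*} [Fintype V] [DecidableEq V]
    (X : Set (Finset V)) : ℕ :=
  sSup {n : ℕ | ∃ A : Finset V,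
    (A ∈ X ∧ IsSimplex (link X A) ∧ ∀ B ⊂ A, ¬ IsSimplex (link X B)) ∧ A.card = n}

theorem aux_indep_iff (A : Finset (Fin 4)) :
    A ∈ indComplex (SimpleGraph.pathGraph 4) ↔
      ∀ x ∈ A, ∀ y ∈ A, ¬ (x.val + 1 = y.val ∨ y.val + 1 = x.val) := by
  simp only [indComplex, IsIndepSet, Set.mem_ofPred_eq, SimpleGraph.pathGraph_adj,
    Finset.mem_coe]

theorem aux_card : ∀ A : Finset (Fin 4),
    (∀ x ∈ A, ∀ y ∈ A, ¬ (x.val + 1 = y.val ∨ y.val + 1 = x.val)) → A.card ≤ 2 := by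
  decide

theorem aux_not_simplex {B : Finset (Fin 4)} {x y : Fin 4} (hxy : x.val + 1 = y.val)
    (hx : {x} ∈ link (indComplex (SimpleGraph.pathGraph 4)) B)
    (hy : {y} ∈ link (indComplex (SimpleGraph.pathGraph 4)) B) :
    ¬ IsSimplex (link (indComplex (SimpleGraph.pathGraph 4)) B) := by
  intro h
  have h1 := (aux_indep_iff _).1 h.1
  refine h1 x ?_ y ?_ (Or.inl hxy)
  · exact (@Finset.mem_filter _ _ (_) _ _).2 ⟨Finset.mem_univ _, _, hx, Finset.mem_singleton_self _⟩
  · exact (@Finset.mem_filter _ _ (_) _ _).2 ⟨Finset.mem_univ _, _, hy, Finset.mem_singleton_self _⟩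

theorem aux_link (A T : Finset (Fin 4)) :
    T ∈ link (indComplex (SimpleGraph.pathGraph 4)) A ↔
      (∀ x ∈ T, ∀ y ∈ T, ¬ (x.val + 1 = y.val ∨ y.val + 1 = x.val)) ∧ A ∩ T = ∅ ∧
      (∀ x ∈ T ∪ A, ∀ y ∈ T ∪ A, ¬ (x.val + 1 = y.val ∨ y.val + 1 = x.val)) := by
  rw [← aux_indep_iff, ← aux_indep_iff]; rfl

theorem aux_link_empty : ∀ T : Finset (Fin 4),
      ((∀ x ∈ T, ∀ y ∈ T, ¬ (x.val + 1 = y.val ∨ y.val + 1 = x.val)) ∧ {0, 3} ∩ T = ∅ ∧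
      (∀ x ∈ T ∪ {0, 3}, ∀ y ∈ T ∪ {0, 3}, ¬ (x.val + 1 = y.val ∨ y.val + 1 = x.val))) ↔
      T = ∅ := by
  decide

theorem aux_v : vNumber (SimpleGraph.pathGraph 4) = 1 := by
  have h1 : (1 : ℕ) ∈ {n : ℕ | ∃ A : Finset (Fin 4),
      IsIndepSet (SimpleGraph.pathGraph 4) ↑A ∧
      IsMinVertexCover (SimpleGraph.pathGraph 4) (nbhdSet (SimpleGraph.pathGraph 4) ↑A) ∧
      A.card = n} := by
    refine ⟨{1}, ?_, ⟨?_, ?_⟩, rfl⟩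
    · simp [IsIndepSet]
    · intro x y h
      simp only [nbhdSet, Finset.coe_singleton, Set.mem_singleton_iff, exists_eq_left,
        Set.mem_ofPred_eq, SimpleGraph.pathGraph_adj] at h ⊢
      revert x y; decide
    · intro W hW hc
      apply hW.2
      intro v hv
      have h1 : (1 : Fin 4) ∉ W := by
        intro h
        have := hW.1 h
        simp [nbhdSet] at this
      have hv' : (SimpleGraph.pathGraph 4).Adj 1 v := by
        simpa [nbhdSet] using hv
      exact (hc _ _ hv').resolve_left h1
  refine le_antisymm (Nat.sInf_le h1) ?_
  refine le_csInf ⟨1, h1⟩ ?_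
  rintro n ⟨A, -, hA, rfl⟩
  rw [Nat.one_le_iff_ne_zero]
  intro h0
  rw [Finset.card_eq_zero] at h0
  subst h0
  have := hA.1 0 1 (by rw [SimpleGraph.pathGraph_adj]; decide)
  simp [nbhdSet] at this

theorem aux_beta : betaNumber (indComplex (SimpleGraph.pathGraph 4)) = 2 := by
  refine IsGreatest.csSup_eq ⟨⟨{0, 3}, ⟨?_, ?_, ?_⟩, rfl⟩, ?_⟩
  · rw [aux_indep_iff]; decide
  · have hl : ∀ T, T ∈ link (indComplex (SimpleGraph.pathGraph 4)) {0, 3} ↔ T = ∅ :=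
      fun T => (aux_link _ T).trans (aux_link_empty T)
    unfold IsSimplex
    rw [hl]
    simp [hl]
  · intro B hB
    have key : ∀ B : Finset (Fin 4), B ⊂ {0, 3} → B = ∅ ∨ B = {0} ∨ B = {3} := by decide
    rcases key B hB with rfl | rfl | rfl
    · apply aux_not_simplex (x := 0) (y := 1) (by decide) <;> rw [aux_link] <;> decide
    · apply aux_not_simplex (x := 2) (y := 3) (by decide) <;> rw [aux_link] <;> decide
    · apply aux_not_simplex (x := 0) (y := 1) (by decide) <;> rw [aux_link] <;> decide
  · rintro n ⟨A, ⟨hA, -⟩, rfl⟩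
    exact aux_card A ((aux_indep_iff A).1 hA)

/-- For the path graph `P₄` on four vertices,
`v(P₄) = 1` and `β(Ind(P₄)) = 2`; in particular the inequality
`v(X) ≤ β(X)` can be strict even for independence complexes of graphs. -/
theorem vNumber_pathGraph_four_and_betaNumber :
    vNumber (SimpleGraph.pathGraph 4) = 1 ∧
    betaNumber (indComplex (SimpleGraph.pathGraph 4)) = 2 := by
  exact ⟨aux_v, aux_beta⟩
end
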